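/- For every prime l ≥ 3, the complex dimension of S₄(l)_+ equals (l−1)(l−3)/8. Moreover, every linear relation among the classes xy(u,v)_+ in S₄(l)_+ follows from the relations xy(u,v)_+ = −xy(−u,v)_+ = −xy(v,u)_+; that is, the kernel of the linear map from the free ℂ-vector space on symbols XY(u,v), (u,v) ∈ (ℤ/lℤ)² ∖ {(0,0)}, to S₄(l)_+ sending XY(u,v) to xy(u,v)_+ is spanned by the elements XY(u,v) + XY(−u,v) and XY(u,v) + XY(v,u). -/

import Mathlib

open scoped BigOperators

namespace MW

variable (l : ℕ)

/-- Index type for the basis symbols: `0 ↦ x²`, `1 ↦ xy`, `2 ↦ y²`. -/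
abbrev Sym := Fin 3 × ZMod l × ZMod l

/-- The free ℂ-vector space on the symbols. -/
abbrev V := Sym l →₀ ℂ

/-- `gcd(u,v,l) = 1`. -/
def copr (u v : ZMod l) : Prop := Nat.gcd (Nat.gcd (ZMod.val u) (ZMod.val v)) l = 1

instance (u v : ZMod l) : Decidable (copr l u v) := by unfold copr; infer_instance

noncomputable def X2 (u v : ZMod l) : V l := Finsupp.single (0, u, v) 1
noncomputable def XY (u v : ZMod l) : V l := Finsupp.single (1, u, v) 1
noncomputable def Y2 (u v : ZMod l) : V l := Finsupp.single (2, u, v) 1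

/-- The relation subspace: the relations of Merel–Shokurov on coprime symbols,
together with the (dummy) basis vectors at non-coprime indices. -/
noncomputable def Rel : Submodule ℂ (V l) :=
  Submodule.span ℂ
    ({ w | ∃ u v, ¬ copr l u v ∧ (w = X2 l u v ∨ w = XY l u v ∨ w = Y2 l u v) } ∪
     { w | ∃ u v, copr l u v ∧
        (w = X2 l u v + Y2 l v (-u) ∨
         w = XY l u v - XY l v (-u) ∨
         w = Y2 l u v + X2 l v (-u) ∨
         w = XY l v (-u - v) - XY l (-u - v) u + Y2 l (-u - v) u + X2 l u v - XY l u v) })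

/-- The space of weight four modular symbols of level `l`. -/
abbrev M := V l ⧸ Rel l

noncomputable def x2 (u v : ZMod l) : M l := Submodule.Quotient.mk (X2 l u v)
noncomputable def xy (u v : ZMod l) : M l := Submodule.Quotient.mk (XY l u v)
noncomputable def y2 (u v : ZMod l) : M l := Submodule.Quotient.mk (Y2 l u v)

/-- The class of `p₂·x²(u,v) + p₁·xy(u,v) + p₀·y²(u,v)` in `M l`. -/
noncomputable def pcl (p2 p1 p0 : ℂ) (u v : ZMod l) : M l :=
  p2 • x2 l u v + p1 • xy l u v + p0 • y2 l u v

/-- Reduction `ZMod l → ZMod (gcd(a,l))`. -/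
noncomputable def castg (a : ZMod l) : ZMod l →+* ZMod (Nat.gcd (ZMod.val a) l) :=
  ZMod.castHom (Nat.gcd_dvd_right (ZMod.val a) l) (ZMod (Nat.gcd (ZMod.val a) l))

/-- The functional on `V l` attached to the cusp data `(a, b)`. -/
noncomputable def psiV (a : ZMod l) (b : ZMod (Nat.gcd (ZMod.val a) l)) : V l →ₗ[ℂ] ℂ :=
  Finsupp.lift ℂ ℂ (Sym l) fun p =>
    if copr l p.2.1 p.2.2 then
      (if p.1 = 0 then
        ((if p.2.1 = a ∧ castg l a p.2.2 = b then (1 : ℂ) else 0) +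
         (if p.2.1 = -a ∧ castg l a p.2.2 = -b then (1 : ℂ) else 0))
       else if p.1 = 2 then
        (-(if p.2.2 = a ∧ castg l a p.2.1 = -b then (1 : ℂ) else 0) -
          (if p.2.2 = -a ∧ castg l a p.2.1 = b then (1 : ℂ) else 0))
       else 0)
    else 0

/-- The cuspidal subspace `S₄(l) ⊆ M₄(l)`: the (image in `M l` of the) intersection
of the kernels of all the functionals `ψ_{(a,b)}`. -/
noncomputable def S : Submodule ℂ (M l) :=
  Submodule.map (Rel l).mkQ
    (⨅ (a : ZMod l), ⨅ (b : ZMod (Nat.gcd (ZMod.val a) l)), ⨅ (_ : IsUnit b),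
      LinearMap.ker (psiV l a b))

/-- The linear map on `V l` underlying the involution `i`:
`x²(u,v) ↦ x²(-u,v)`, `xy(u,v) ↦ -xy(-u,v)`, `y²(u,v) ↦ y²(-u,v)`. -/
noncomputable def iV : V l →ₗ[ℂ] V l :=
  Finsupp.lift (V l) ℂ (Sym l) fun p =>
    if p.1 = 1 then -(Finsupp.single (1, -p.2.1, p.2.2) (1 : ℂ))
    else Finsupp.single (p.1, -p.2.1, p.2.2) (1 : ℂ)

end MW

/-
The proof rests on a universal property: every function `β : (ℤ/l)² → Q` that is odd in the first
variable and skew-symmetric is `xy(u,v) ↦ β(u,v)` for some linear map `M₄(l) → Q`. Indeed the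
relations determine the required values on `x²(u, ·)` up to a constant by a difference equation
along `v ↦ u + v`, whose right-hand side is odd under the reflection `v ↦ -u - v` and therefore
sums to zero over `ℤ/l`. Taking for `β` the universal such function shows that the `xy(u,v)₊` have
only the obvious relations; taking wedges of odd indicator functions shows that those with
`0 < u < v ≤ (l-1)/2` are independent. Finally `S₄(l)` is spanned by the `xy(u,v)`, since modulo
these a modular symbol is a combination of the `x²(a,0)` and `x²(0,b)` whose coefficients are its
values under the functionals `ψ`.
-/

namespace MW

open Finset

/-! ### Odd skew-symmetric functions -/

/-- Functions of two variables that are odd in the first variable and change sign when the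
variables are exchanged; these are the symmetries of the classes `xy(u,v)₊`. -/
structure IsOddSkew {G Q : Type*} [Neg G] [Neg Q] (β : G → G → Q) : Prop where
  neg_left : ∀ u v, β (-u) v = -β u v
  swap : ∀ u v, β v u = -β u v

namespace IsOddSkew

variable {G Q : Type*} [AddGroup G] [AddCommGroup Q] {β : G → G → Q}

lemma neg_right (hβ : IsOddSkew β) (u v : G) : β u (-v) = -β u v := by
  rw [hβ.swap (-v), hβ.neg_left, hβ.swap u v, neg_neg]

variable [IsAddTorsionFree Q]

lemma self (hβ : IsOddSkew β) (u : G) : β u u = 0 :=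
  self_eq_neg.1 (hβ.swap u u)

lemma zero_left (hβ : IsOddSkew β) (v : G) : β 0 v = 0 :=
  self_eq_neg.1 (by simpa using hβ.neg_left 0 v)

lemma zero_right (hβ : IsOddSkew β) (u : G) : β u 0 = 0 := by
  rw [hβ.swap 0 u, hβ.zero_left, neg_zero]

end IsOddSkew

section Wedge

variable {G K : Type*} [CommRing K]

/-- The wedge product `f ∧ g` of two functions of one variable. -/
def wedge (f g : G → K) (u v : G) : K := f u * g v - g u * f v

lemma isOddSkew_wedge [Neg G] {f g : G → K} (hf : f.Odd) (hg : g.Odd) :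
    IsOddSkew (wedge f g) where
  neg_left u v := by simp only [wedge, hf u, hg u]; ring
  swap u v := by simp only [wedge]; ring

/-- The indicator function of `a` minus that of `-a`. -/
def oddIndicator [InvolutiveNeg G] [DecidableEq G] (K : Type*) [CommRing K] (a u : G) : K :=
  (if u = a then 1 else 0) - if u = -a then 1 else 0

lemma odd_oddIndicator [InvolutiveNeg G] [DecidableEq G] (a : G) : (oddIndicator K a).Odd := by
  intro u
  simp only [oddIndicator, neg_eq_iff_eq_neg, neg_neg, neg_sub]

end Wedge

/-! ### The universal odd skew-symmetric function -/

section Universal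

variable (G K : Type*) [AddGroup G] [Ring K]

/-- The relations imposed on the free module on `G² ∖ {0}` by oddness and skew-symmetry. -/
noncomputable def skewRelations : Submodule K ({p : G × G // p ≠ 0} →₀ K) :=
  Submodule.span K
    {w | ∃ p q : {p : G × G // p ≠ 0},
      (q.1 = (-p.1.1, p.1.2) ∨ q.1 = (p.1.2, p.1.1)) ∧
      w = Finsupp.single p 1 + Finsupp.single q 1}

variable {G}

open scoped Classical in
/-- The universal odd skew-symmetric function on `G`, extended by zero to the pair `(0,0)`, which
is not among the generators. -/
noncomputable def universalSkew (u v : G) : ({p : G × G // p ≠ 0} →₀ K) ⧸ skewRelations G K :=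
  if h : (u, v) ≠ 0 then (skewRelations G K).mkQ (Finsupp.single ⟨(u, v), h⟩ 1) else 0

lemma universalSkew_coe (p : {p : G × G // p ≠ 0}) :
    universalSkew K p.1.1 p.1.2 = (skewRelations G K).mkQ (Finsupp.single p 1) :=
  dif_pos p.2

lemma universalSkew_zero : universalSkew K (0 : G) 0 = 0 :=
  dif_neg (not_not.2 rfl)

variable {K} in
lemma universalSkew_eq_neg {p q : {p : G × G // p ≠ 0}}
    (h : q.1 = (-p.1.1, p.1.2) ∨ q.1 = (p.1.2, p.1.1)) :
    universalSkew K q.1.1 q.1.2 = -universalSkew K p.1.1 p.1.2 := by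
  rw [universalSkew_coe, universalSkew_coe, eq_neg_iff_add_eq_zero, add_comm, ← map_add]
  exact (Submodule.Quotient.mk_eq_zero _).2 (Submodule.subset_span ⟨p, q, h, rfl⟩)

lemma isOddSkew_universalSkew : IsOddSkew (universalSkew K : G → G → _) where
  neg_left u v := by
    by_cases h : (u, v) = 0
    · obtain ⟨rfl, rfl⟩ := Prod.mk_eq_zero.1 h
      simp only [neg_zero, universalSkew_zero]
    · exact universalSkew_eq_neg (p := ⟨(u, v), h⟩)
        (q := ⟨(-u, v), by simpa only [ne_eq, Prod.mk_eq_zero, neg_eq_zero] using h⟩) (Or.inl rfl)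
  swap u v := by
    by_cases h : (u, v) = 0
    · obtain ⟨rfl, rfl⟩ := Prod.mk_eq_zero.1 h
      simp only [neg_zero, universalSkew_zero]
    · exact universalSkew_eq_neg (p := ⟨(u, v), h⟩)
        (q := ⟨(v, u), by simpa only [ne_eq, Prod.mk_eq_zero, and_comm] using h⟩) (Or.inr rfl)

variable {K} {Q : Type*} [AddCommGroup Q] [Module K Q] {β : G → G → Q}

theorem ker_lift_eq_skewRelations (hβ : IsOddSkew β)
    (φ : Q →ₗ[K] ({p : G × G // p ≠ 0} →₀ K) ⧸ skewRelations G K)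
    (hφ : ∀ u v, φ (β u v) = universalSkew K u v) :
    LinearMap.ker (Finsupp.lift Q K {p : G × G // p ≠ 0} fun p ↦ β p.1.1 p.1.2) =
      skewRelations G K := by
  set F := Finsupp.lift Q K {p : G × G // p ≠ 0} fun p ↦ β p.1.1 p.1.2
  have hF (p : {p : G × G // p ≠ 0}) : F (Finsupp.single p 1) = β p.1.1 p.1.2 := by
    simp [F]
  apply le_antisymm
  · have hφF : φ ∘ₗ F = (skewRelations G K).mkQ := by
      refine Finsupp.lhom_ext' fun p ↦ LinearMap.ext_ring ?_
      simp [hF, hφ, universalSkew_coe]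
    calc LinearMap.ker F ≤ LinearMap.ker (φ ∘ₗ F) := LinearMap.ker_le_ker_comp F φ
      _ = skewRelations G K := by rw [hφF, Submodule.ker_mkQ]
  · refine Submodule.span_le.2 ?_
    rintro _ ⟨p, q, h | h, rfl⟩ <;> rw [SetLike.mem_coe, LinearMap.mem_ker, map_add, hF, hF, h]
    · rw [hβ.neg_left, add_neg_cancel]
    · rw [hβ.swap p.1.1, add_neg_cancel]

end Universal

/-! ### Half-systems and dimensions -/

section HalfSystem

/-- A half-system: a family picking exactly one element from each pair `{u, -u}` with `u ≠ 0`, in a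
group where no such pair is degenerate. -/
structure IsHalfSystem {ι G : Type*} [AddGroup G] (e : ι → G) : Prop where
  injective : Function.Injective e
  ne_neg : ∀ i j, e i ≠ -e j
  cover : ∀ u, u = 0 ∨ ∃ i, u = e i ∨ u = -e i

lemma isHalfSystem_zmod (n : ℕ) :
    IsHalfSystem fun i : Fin n ↦ ((i + 1 : ℕ) : ZMod (2 * n + 1)) where
  injective i j h := by
    rw [ZMod.natCast_eq_natCast_iff', Nat.mod_eq_of_lt (by lia), Nat.mod_eq_of_lt (by lia)] at h
    lia
  ne_neg i j h := by
    rw [eq_neg_iff_add_eq_zero, ← Nat.cast_add, ZMod.natCast_eq_zero_iff] at h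
    have := Nat.le_of_dvd (by lia) h
    lia
  cover u := by
    have hu := ZMod.val_lt u
    rcases Nat.eq_zero_or_pos u.val with h0 | h0
    · exact Or.inl ((ZMod.val_eq_zero u).1 h0)
    refine Or.inr ?_
    by_cases hn : u.val ≤ n
    · refine ⟨⟨u.val - 1, by lia⟩, Or.inl ?_⟩
      rw [Nat.sub_add_cancel h0, ZMod.natCast_zmod_val]
    · refine ⟨⟨2 * n + 1 - u.val - 1, by lia⟩, Or.inr ?_⟩
      rw [Nat.sub_add_cancel (by lia), Nat.cast_sub hu.le, ZMod.natCast_self,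
        ZMod.natCast_zmod_val, zero_sub, neg_neg]

variable {ι G K Q : Type*} [AddGroup G] {e : ι → G}

lemma oddIndicator_halfSystem [DecidableEq ι] [DecidableEq G] [CommRing K] (he : IsHalfSystem e)
    (i j : ι) : oddIndicator K (e i) (e j) = if j = i then 1 else 0 := by
  simp only [oddIndicator, he.injective.eq_iff, he.ne_neg, if_false, sub_zero]

variable [LinearOrder ι]

lemma wedge_oddIndicator_halfSystem [DecidableEq G] [CommRing K] (he : IsHalfSystem e)
    (p q : {p : ι × ι // p.1 < p.2}) :
    wedge (oddIndicator K (e p.1.1)) (oddIndicator K (e p.1.2)) (e q.1.1) (e q.1.2) =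
      if p = q then 1 else 0 := by
  obtain ⟨⟨i, j⟩, hij : i < j⟩ := p
  obtain ⟨⟨i', j'⟩, hij' : i' < j'⟩ := q
  have hcross : ¬(i' = j ∧ j' = i) := by
    rintro ⟨rfl, rfl⟩
    exact lt_asymm hij hij'
  simp only [wedge, oddIndicator_halfSystem he, ite_zero_mul_ite_zero, mul_one, hcross, if_false,
    sub_zero, Subtype.mk.injEq, Prod.mk.injEq, eq_comm (a := i), eq_comm (a := j)]

variable [AddCommGroup Q] {β : G → G → Q}

lemma span_range_eq_span_halfSystem [IsAddTorsionFree Q] [Ring K] [Module K Q] (hβ : IsOddSkew β)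
    (he : IsHalfSystem e) :
    Submodule.span K (Set.range fun p : G × G ↦ β p.1 p.2) =
      Submodule.span K
        (Set.range fun p : {p : ι × ι // p.1 < p.2} ↦ β (e p.1.1) (e p.1.2)) := by
  set N := Submodule.span K
    (Set.range fun p : {p : ι × ι // p.1 < p.2} ↦ β (e p.1.1) (e p.1.2))
  have mem_of_lt {i j : ι} (h : i < j) : β (e i) (e j) ∈ N :=
    Submodule.subset_span ⟨⟨(i, j), h⟩, rfl⟩
  have mem (i j : ι) : β (e i) (e j) ∈ N := by
    rcases lt_trichotomy i j with h | rfl | h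
    · exact mem_of_lt h
    · rw [hβ.self]
      exact N.zero_mem
    · rw [hβ.swap]
      exact N.neg_mem (mem_of_lt h)
  apply le_antisymm
  · refine Submodule.span_le.2 ?_
    rintro _ ⟨⟨u, v⟩, rfl⟩
    rcases he.cover u with rfl | ⟨i, rfl | rfl⟩ <;> rcases he.cover v with rfl | ⟨j, rfl | rfl⟩ <;>
      simp [hβ.zero_left, hβ.zero_right, hβ.neg_left, hβ.neg_right, mem]
  · exact Submodule.span_mono (Set.range_subset_iff.2 fun p ↦ ⟨(e p.1.1, e p.1.2), rfl⟩)

lemma linearIndependent_halfSystem [CommRing K] [Module K Q] (he : IsHalfSystem e)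
    (hdual : ∀ κ : G → G → K, IsOddSkew κ → ∃ φ : Q →ₗ[K] K, ∀ u v, φ (β u v) = κ u v) :
    LinearIndependent K fun p : {p : ι × ι // p.1 < p.2} ↦ β (e p.1.1) (e p.1.2) := by
  classical
  choose φ hφ using fun p : {p : ι × ι // p.1 < p.2} ↦ hdual _
    (isOddSkew_wedge (odd_oddIndicator (K := K) (e p.1.1)) (odd_oddIndicator (e p.1.2)))
  refine .of_pairwise_dual_eq_zero_one _ φ (fun p q hpq ↦ ?_) fun p ↦ ?_
  · exact (hφ p _ _).trans (by rw [wedge_oddIndicator_halfSystem he, if_neg hpq])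
  · exact (hφ p _ _).trans (by rw [wedge_oddIndicator_halfSystem he, if_pos rfl])

theorem finrank_span_range_eq_choose_two [Fintype ι] [IsAddTorsionFree Q] [Field K] [Module K Q]
    (hβ : IsOddSkew β) (he : IsHalfSystem e)
    (hdual : ∀ κ : G → G → K, IsOddSkew κ → ∃ φ : Q →ₗ[K] K, ∀ u v, φ (β u v) = κ u v) :
    Module.finrank K (Submodule.span K (Set.range fun p : G × G ↦ β p.1 p.2)) =
      (Fintype.card ι).choose 2 := by
  rw [span_range_eq_span_halfSystem hβ he,
    finrank_span_eq_card (linearIndependent_halfSystem he hdual), Fintype.card_subtype,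
    Fintype.card_product_filter_lt]

end HalfSystem

/-! ### Difference equations on `ℤ/n` -/

section Primitive

variable {n : ℕ} {Q : Type*}

lemma sum_range_natCast_zmod [NeZero n] [AddCommMonoid Q] (f : ZMod n → Q) :
    ∑ j ∈ range n, f j = ∑ k, f k :=
  sum_nbij' (fun j ↦ (j : ZMod n)) ZMod.val (by simp) (by simp [ZMod.val_lt])
    (fun _ hj ↦ ZMod.val_cast_of_lt (mem_range.1 hj)) (by simp) (by simp)

/-- The discrete primitive of `f` vanishing at `0`. It solves `F (k + 1) = F k + f k` also at the
wrap-around `k = -1` only if `f` sums to zero. -/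
def primitive [AddCommMonoid Q] (f : ZMod n → Q) (k : ZMod n) : Q :=
  ∑ j ∈ range k.val, f j

lemma primitive_add_one [NeZero n] [AddCommMonoid Q] {f : ZMod n → Q} (hf : ∑ k, f k = 0)
    (k : ZMod n) : primitive f (k + 1) = primitive f k + f k := by
  have hperiodic : Function.Periodic (fun m ↦ ∑ j ∈ range m, f j) n := fun m ↦ by
    simp [add_comm m n, sum_range_add, sum_range_natCast_zmod, hf]
  have hval : (k + 1).val = (k.val + 1) % n := by
    rw [← ZMod.val_natCast, Nat.cast_succ, ZMod.natCast_zmod_val]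
  rw [primitive, hval, hperiodic.map_mod_nat, sum_range_succ, ZMod.natCast_zmod_val, primitive]

end Primitive

section ThreeTerm

variable {R Q : Type*} [AddCommGroup Q]

/-- The value of `x²(u,v) - x²(u,u+v)` forced by the three-term relation once `xy` takes the
values `β`. -/
def threeTerm [Add R] (β : R → R → Q) (u v : R) : Q := β u v + β u (u + v) - β (u + v) v

section AddCommGroup

variable [AddCommGroup R] {β : R → R → Q}

lemma threeTerm_neg_neg (hβ : IsOddSkew β) (u v : R) :
    threeTerm β (-u) (-v) = threeTerm β u v := by
  simp only [threeTerm, ← neg_add, hβ.neg_left, hβ.neg_right, neg_neg]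

lemma threeTerm_neg_sub (hβ : IsOddSkew β) (u v : R) :
    threeTerm β u (-u - v) = -threeTerm β u v := by
  have h₁ : u + (-u - v) = -v := by abel
  have h₂ : -u - v = -(u + v) := by abel
  rw [threeTerm, threeTerm, h₁, h₂, hβ.neg_right, hβ.neg_right, hβ.neg_left, hβ.neg_right,
    hβ.swap (u + v) v]
  abel

lemma threeTerm_zero_left [IsAddTorsionFree Q] (hβ : IsOddSkew β) (v : R) :
    threeTerm β 0 v = 0 := by
  simp only [threeTerm, zero_add, hβ.zero_left, hβ.self, add_zero, sub_zero]

end AddCommGroup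

lemma sum_threeTerm_mul [CommRing R] [Fintype R] [IsAddTorsionFree Q] {β : R → R → Q}
    (hβ : IsOddSkew β) (u : R) : ∑ k, threeTerm β u (k * u) = 0 := by
  refine self_eq_neg.1 ?_
  rw [← sum_neg_distrib]
  refine Fintype.sum_equiv (Equiv.subLeft (-1)) _ _ fun k ↦ ?_
  rw [Equiv.subLeft_apply, ← threeTerm_neg_sub hβ]
  ring_nf

section ZMod

variable {l : ℕ} [Fact l.Prime] {β : ZMod l → ZMod l → Q}

/-- The solution `γ` of `γ(u,v) - γ(u,u+v) = threeTerm β u v` with `γ(u,0) = 0` for `u ≠ 0`; as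
`v / 0 = 0`, it vanishes for `u = 0`. -/
noncomputable def x2Value (β : ZMod l → ZMod l → Q) (u v : ZMod l) : Q :=
  -primitive (fun k ↦ threeTerm β u (k * u)) (v / u)

lemma x2Value_neg_neg (hβ : IsOddSkew β) (u v : ZMod l) :
    x2Value β (-u) (-v) = x2Value β u v := by
  simp only [x2Value, neg_div_neg_eq, mul_neg, threeTerm_neg_neg hβ]

lemma x2Value_sub_x2Value_add [IsAddTorsionFree Q] (hβ : IsOddSkew β) (u v : ZMod l) :
    x2Value β u v - x2Value β u (u + v) = threeTerm β u v := by
  rcases eq_or_ne u 0 with rfl | hu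
  · rw [zero_add, sub_self, threeTerm_zero_left hβ]
  · rw [x2Value, x2Value, add_div, div_self hu, add_comm 1,
      primitive_add_one (sum_threeTerm_mul hβ u), div_mul_cancel₀ v hu]
    abel

end ZMod

end ThreeTerm

/-! ### The space of modular symbols of prime level -/

section Symbols

variable {l : ℕ} {Q : Type*} [AddCommGroup Q] [Module ℂ Q]

lemma symbol_hom_ext {f g : V l →ₗ[ℂ] Q} (hX : ∀ u v, f (X2 l u v) = g (X2 l u v))
    (hXY : ∀ u v, f (XY l u v) = g (XY l u v)) (hY : ∀ u v, f (Y2 l u v) = g (Y2 l u v)) :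
    f = g := by
  ext ⟨s, u, v⟩
  fin_cases s
  exacts [hX u v, hXY u v, hY u v]

/-- The linear map on symbols with values `β` on `xy` and `γ` on `x²`; its values on `y²` are those
forced by `y²(u,v) = -x²(v,-u)`. -/
noncomputable def symbolMap (β γ : ZMod l → ZMod l → Q) : V l →ₗ[ℂ] Q :=
  Finsupp.linearCombination ℂ fun p : Sym l ↦
    ![γ p.2.1 p.2.2, β p.2.1 p.2.2, -γ p.2.2 (-p.2.1)] p.1

lemma symbolMap_X2 (β γ : ZMod l → ZMod l → Q) (u v : ZMod l) :
    symbolMap β γ (X2 l u v) = γ u v := by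
  simp [symbolMap, X2]

lemma symbolMap_XY (β γ : ZMod l → ZMod l → Q) (u v : ZMod l) :
    symbolMap β γ (XY l u v) = β u v := by
  simp [symbolMap, XY]

lemma symbolMap_Y2 (β γ : ZMod l → ZMod l → Q) (u v : ZMod l) :
    symbolMap β γ (Y2 l u v) = -γ v (-u) := by
  simp [symbolMap, Y2]

lemma psiV_X2_of_copr {u v : ZMod l} (h : copr l u v) (a : ZMod l)
    (b : ZMod (Nat.gcd (ZMod.val a) l)) :
    psiV l a b (X2 l u v) = (if u = a ∧ castg l a v = b then 1 else 0) +
      if u = -a ∧ castg l a v = -b then 1 else 0 := by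
  simp [psiV, X2, h]

lemma psiV_XY (a : ZMod l) (b : ZMod (Nat.gcd (ZMod.val a) l)) (u v : ZMod l) :
    psiV l a b (XY l u v) = 0 := by
  simp [psiV, XY]

lemma psiV_Y2_of_copr {u v : ZMod l} (h : copr l u v) (a : ZMod l)
    (b : ZMod (Nat.gcd (ZMod.val a) l)) :
    psiV l a b (Y2 l u v) = -(if v = a ∧ castg l a u = -b then 1 else 0) -
      if v = -a ∧ castg l a u = b then 1 else 0 := by
  simp [psiV, Y2, h]

variable [Fact l.Prime]

lemma copr_iff (u v : ZMod l) : copr l u v ↔ ¬(u = 0 ∧ v = 0) := by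
  rw [copr, ← Nat.coprime_iff_gcd_eq_one, Nat.coprime_comm,
    (Fact.out : l.Prime).coprime_iff_not_dvd, Nat.dvd_gcd_iff, ← ZMod.natCast_eq_zero_iff,
    ← ZMod.natCast_eq_zero_iff, ZMod.natCast_zmod_val, ZMod.natCast_zmod_val]

lemma copr_or_eq_zero (u v : ZMod l) : copr l u v ∨ u = 0 ∧ v = 0 := by
  rw [copr_iff]
  exact (em _).symm

lemma not_copr_zero : ¬copr l 0 0 := by
  simp [copr_iff]

section Relations

lemma x2_zero : x2 l 0 0 = 0 :=
  (Submodule.Quotient.mk_eq_zero _).2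
    (Submodule.subset_span (Or.inl ⟨0, 0, not_copr_zero, Or.inl rfl⟩))

lemma xy_zero : xy l 0 0 = 0 :=
  (Submodule.Quotient.mk_eq_zero _).2
    (Submodule.subset_span (Or.inl ⟨0, 0, not_copr_zero, Or.inr (Or.inl rfl)⟩))

lemma y2_zero : y2 l 0 0 = 0 :=
  (Submodule.Quotient.mk_eq_zero _).2
    (Submodule.subset_span (Or.inl ⟨0, 0, not_copr_zero, Or.inr (Or.inr rfl)⟩))

lemma y2_eq_neg_x2 (u v : ZMod l) : y2 l u v = -x2 l v (-u) := by
  rcases copr_or_eq_zero u v with h | ⟨rfl, rfl⟩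
  · exact eq_neg_of_add_eq_zero_left ((Submodule.Quotient.mk_eq_zero _).2
      (Submodule.subset_span (Or.inr ⟨u, v, h, Or.inr (Or.inr (Or.inl rfl))⟩)))
  · rw [neg_zero, x2_zero, y2_zero, neg_zero]

lemma x2_neg_neg (u v : ZMod l) : x2 l (-u) (-v) = x2 l u v := by
  rcases copr_or_eq_zero u v with h | ⟨rfl, rfl⟩
  · have hrel : x2 l u v + y2 l v (-u) = 0 := (Submodule.Quotient.mk_eq_zero _).2
      (Submodule.subset_span (Or.inr ⟨u, v, h, Or.inl rfl⟩))
    rw [y2_eq_neg_x2, ← sub_eq_add_neg, sub_eq_zero] at hrel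
    exact hrel.symm
  · rw [neg_zero]

lemma xy_neg_right (u v : ZMod l) : xy l v (-u) = xy l u v := by
  rcases copr_or_eq_zero u v with h | ⟨rfl, rfl⟩
  · have hrel : xy l u v - xy l v (-u) = 0 := (Submodule.Quotient.mk_eq_zero _).2
      (Submodule.subset_span (Or.inr ⟨u, v, h, Or.inr (Or.inl rfl)⟩))
    exact (sub_eq_zero.1 hrel).symm
  · rw [neg_zero]

lemma xy_neg_left (u v : ZMod l) : xy l (-u) v = xy l v u := by
  rw [← xy_neg_right, neg_neg]

lemma x2_sub_x2_add (u v : ZMod l) :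
    x2 l u v - x2 l u (u + v) = threeTerm (xy l) u v := by
  have hrel : xy l v (-u - v) - xy l (-u - v) u + y2 l (-u - v) u + x2 l u v - xy l u v = 0 := by
    rcases copr_or_eq_zero u v with h | ⟨rfl, rfl⟩
    · exact (Submodule.Quotient.mk_eq_zero _).2
        (Submodule.subset_span (Or.inr ⟨u, v, h, Or.inr (Or.inr (Or.inr rfl))⟩))
    · simp only [neg_zero, sub_self, zero_add, xy_zero, x2_zero, y2_zero]
  rw [← neg_add', xy_neg_right, xy_neg_left, y2_eq_neg_x2, neg_neg] at hrel
  rw [threeTerm, ← sub_eq_zero, ← hrel]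
  abel

end Relations

section UniversalProperty

variable {β γ : ZMod l → ZMod l → Q}

lemma Rel_le_ker_symbolMap (hβ : IsOddSkew β) (hγ_even : ∀ u v, γ (-u) (-v) = γ u v)
    (hγ_step : ∀ u v, γ u v - γ u (u + v) = threeTerm β u v) (hγ_zero : γ 0 0 = 0) :
    Rel l ≤ LinearMap.ker (symbolMap β γ) := by
  have : IsAddTorsionFree Q := .of_isTorsionFree ℂ Q
  refine Submodule.span_le.2 ?_
  rintro _ (⟨u, v, huv, h⟩ | ⟨u, v, -, h⟩)
  · obtain ⟨rfl, rfl⟩ := (copr_or_eq_zero u v).resolve_left huv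
    rcases h with rfl | rfl | rfl <;>
      simp [symbolMap_X2, symbolMap_XY, symbolMap_Y2, hβ.self, hγ_zero]
  · rw [SetLike.mem_coe, LinearMap.mem_ker]
    rcases h with rfl | rfl | rfl | rfl <;>
      simp only [map_add, map_sub, symbolMap_X2, symbolMap_XY, symbolMap_Y2]
    · rw [hγ_even, add_neg_cancel]
    · rw [hβ.neg_right, hβ.swap u v, neg_neg, sub_self]
    · rw [neg_add_cancel]
    · have hstep := hγ_step u v
      rw [threeTerm, ← sub_eq_zero] at hstep
      rw [← neg_add', hβ.neg_right, hβ.neg_left, neg_neg, hβ.swap u (u + v),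
        hβ.swap (u + v) v, ← hstep]
      abel

theorem exists_hom_xy_eq (hβ : IsOddSkew β) : ∃ φ : M l →ₗ[ℂ] Q, ∀ u v, φ (xy l u v) = β u v := by
  have : IsAddTorsionFree Q := .of_isTorsionFree ℂ Q
  have hzero : x2Value β 0 0 = 0 := by simp [x2Value, primitive]
  exact ⟨(Rel l).liftQ (symbolMap β (x2Value β)) (Rel_le_ker_symbolMap hβ (x2Value_neg_neg hβ)
    (x2Value_sub_x2Value_add hβ) hzero), symbolMap_XY β _⟩

end UniversalProperty

/-! ### The cuspidal subspace -/

section Cuspidal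

lemma psiV_X2_zero (a : ZMod l) (b : ZMod (Nat.gcd (ZMod.val a) l)) :
    psiV l a b (X2 l 0 0) = 0 := by
  simp [psiV, X2, not_copr_zero]

lemma psiV_Y2 (a : ZMod l) (b : ZMod (Nat.gcd (ZMod.val a) l)) (u v : ZMod l) :
    psiV l a b (Y2 l u v) = -psiV l a b (X2 l v (-u)) := by
  rcases copr_or_eq_zero u v with h | ⟨rfl, rfl⟩
  · have h' : copr l v (-u) := by
      rw [copr_iff] at h ⊢
      rwa [neg_eq_zero, and_comm]
    rw [psiV_Y2_of_copr h, psiV_X2_of_copr h', map_neg]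
    simp only [neg_eq_iff_eq_neg, neg_neg]
    ring
  · rw [neg_zero, psiV_X2_zero, neg_zero]
    simp [psiV, Y2, not_copr_zero]

lemma psiV_one_X2 {a : ZMod l} (ha : a ≠ 0) (u v : ZMod l) :
    psiV l a 1 (X2 l u v) = (if u = a then 1 else 0) + if u = -a then 1 else 0 := by
  rcases copr_or_eq_zero u v with h | ⟨rfl, rfl⟩
  · have hgcd : Nat.gcd a.val l = 1 := by
      simpa only [copr, Nat.gcd_self] using (copr_iff a a).2 fun h ↦ ha h.1
    have : Subsingleton (ZMod (Nat.gcd a.val l)) := by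
      rw [hgcd]
      infer_instance
    simp only [psiV_X2_of_copr h, Subsingleton.elim (castg l a v) 1,
      Subsingleton.elim (-1 : ZMod (Nat.gcd a.val l)) 1, and_true]
  · rw [psiV_X2_zero, if_neg ha.symm, if_neg (neg_ne_zero.2 ha).symm, add_zero]

lemma castg_zero_injective : Function.Injective (castg l 0) := by
  have : Nontrivial (ZMod (Nat.gcd (0 : ZMod l).val l)) := by
    rw [ZMod.val_zero, Nat.gcd_zero_left]
    infer_instance
  exact (castg l 0).injective

lemma psiV_zero_X2 {b : ZMod l} (hb : b ≠ 0) (u v : ZMod l) :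
    psiV l 0 (castg l 0 b) (X2 l u v) =
      if u = 0 then (if v = b then 1 else 0) + if v = -b then 1 else 0 else 0 := by
  rcases copr_or_eq_zero u v with h | ⟨rfl, rfl⟩
  · rw [psiV_X2_of_copr h, ← map_neg, neg_zero]
    simp only [castg_zero_injective.eq_iff]
    rcases eq_or_ne u 0 with rfl | hu
    · simp only [true_and, if_true]
    · simp only [hu, false_and, if_false, add_zero]
  · rw [psiV_X2_zero, if_pos rfl, if_neg hb.symm, if_neg (neg_ne_zero.2 hb).symm, add_zero]

lemma sum_ite_add_ite_neg_smul {G K E : Type*} [Fintype G] [DecidableEq G] [InvolutiveNeg G]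
    [Semiring K] [AddCommMonoid E] [Module K E] (g : G → E) (u : G) :
    ∑ a, ((if u = a then (1 : K) else 0) + if u = -a then 1 else 0) • g a = g u + g (-u) := by
  have hneg (a : G) : (if u = -a then (1 : K) else 0) = if -u = a then 1 else 0 :=
    if_congr neg_eq_iff_eq_neg.symm rfl rfl
  simp only [hneg, add_smul, ite_smul, one_smul, zero_smul, sum_add_distrib, sum_ite_eq,
    mem_univ, if_true]

variable {φ : M l →ₗ[ℂ] Q}

lemma map_x2_eq_of_map_xy_eq_zero (hφ : ∀ u v, φ (xy l u v) = 0) {u : ZMod l} (hu : u ≠ 0)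
    (v : ZMod l) : φ (x2 l u v) = φ (x2 l u 0) := by
  have hperiodic : Function.Periodic (fun v ↦ φ (x2 l u v)) u := fun v ↦ by
    have hstep := congrArg φ (x2_sub_x2_add u v)
    simp only [threeTerm, map_sub, map_add, hφ, add_zero, sub_zero] at hstep
    simpa only [add_comm v] using (sub_eq_zero.1 hstep).symm
  simpa only [ZMod.natCast_zmod_val, div_mul_cancel₀ v hu] using hperiodic.nat_mul_eq (v / u).val

lemma two_smul_map_x2_eq_sum_psiV (hφ : ∀ u v, φ (xy l u v) = 0) (u v : ZMod l) :
    (2 : ℂ) • φ (x2 l u v) = ∑ a, psiV l a 1 (X2 l u v) • φ (x2 l a 0) +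
      ∑ b, psiV l 0 (castg l 0 b) (X2 l u v) • φ (x2 l 0 b) := by
  have hfst : ∑ a, psiV l a 1 (X2 l u v) • φ (x2 l a 0) = (2 : ℂ) • φ (x2 l u 0) := by
    calc _ = ∑ a, ((if u = a then (1 : ℂ) else 0) + if u = -a then 1 else 0) • φ (x2 l a 0) := by
          refine sum_congr rfl fun a _ ↦ ?_
          rcases eq_or_ne a 0 with rfl | ha
          · rw [x2_zero, map_zero φ, smul_zero, smul_zero]
          · rw [psiV_one_X2 ha]
      _ = φ (x2 l u 0) + φ (x2 l (-u) (-0)) := by rw [sum_ite_add_ite_neg_smul, neg_zero]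
      _ = _ := by rw [x2_neg_neg, two_smul]
  have hsnd : ∑ b, psiV l 0 (castg l 0 b) (X2 l u v) • φ (x2 l 0 b) =
      if u = 0 then (2 : ℂ) • φ (x2 l 0 v) else 0 := by
    calc _ = ∑ b, (if u = 0 then (if v = b then (1 : ℂ) else 0) + if v = -b then 1 else 0
            else 0) • φ (x2 l 0 b) := by
          refine sum_congr rfl fun b _ ↦ ?_
          rcases eq_or_ne b 0 with rfl | hb
          · rw [x2_zero, map_zero φ, smul_zero, smul_zero]
          · rw [psiV_zero_X2 hb]
      _ = if u = 0 then φ (x2 l 0 v) + φ (x2 l (-0) (-v)) else 0 := by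
          split_ifs
          · rw [sum_ite_add_ite_neg_smul, neg_zero]
          · simp only [zero_smul, sum_const_zero]
      _ = _ := by rw [x2_neg_neg, two_smul]
  rw [hfst, hsnd]
  rcases eq_or_ne u 0 with rfl | hu
  · rw [if_pos rfl, x2_zero, map_zero φ, smul_zero, zero_add]
  · rw [if_neg hu, add_zero, map_x2_eq_of_map_xy_eq_zero hφ hu]

theorem two_smul_map_mk_eq_sum_psiV (hφ : ∀ u v, φ (xy l u v) = 0) (w : V l) :
    (2 : ℂ) • φ ((Rel l).mkQ w) = ∑ a, psiV l a 1 w • φ (x2 l a 0) +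
      ∑ b, psiV l 0 (castg l 0 b) w • φ (x2 l 0 b) := by
  suffices h : (2 : ℂ) • φ ∘ₗ (Rel l).mkQ =
      ∑ a, (psiV l a 1).smulRight (φ (x2 l a 0)) +
        ∑ b, (psiV l 0 (castg l 0 b)).smulRight (φ (x2 l 0 b)) by
    simpa using LinearMap.congr_fun h w
  have map_mkQ_X2 (u v : ZMod l) : φ ((Rel l).mkQ (X2 l u v)) = φ (x2 l u v) := rfl
  have map_mkQ_XY (u v : ZMod l) : φ ((Rel l).mkQ (XY l u v)) = 0 := hφ u v
  have map_mkQ_Y2 (u v : ZMod l) : φ ((Rel l).mkQ (Y2 l u v)) = -φ (x2 l v (-u)) := by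
    rw [← map_neg, ← y2_eq_neg_x2]
    rfl
  refine symbol_hom_ext (fun u v ↦ ?_) (fun u v ↦ ?_) (fun u v ↦ ?_) <;>
    simp only [LinearMap.smul_apply, LinearMap.comp_apply, LinearMap.add_apply,
      LinearMap.sum_apply, LinearMap.smulRight_apply]
  · rw [map_mkQ_X2, two_smul_map_x2_eq_sum_psiV hφ]
  · simp only [map_mkQ_XY, psiV_XY, zero_smul, smul_zero, sum_const_zero, add_zero]
  · simp only [map_mkQ_Y2, psiV_Y2, smul_neg, neg_smul, sum_neg_distrib]
    rw [two_smul_map_x2_eq_sum_psiV hφ, neg_add]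

lemma S_le_ker_of_map_xy_eq_zero (hφ : ∀ u v, φ (xy l u v) = 0) : S l ≤ LinearMap.ker φ := by
  rintro _ ⟨w, hw, rfl⟩
  simp only [SetLike.mem_coe, Submodule.mem_iInf, LinearMap.mem_ker] at hw
  have hfst (a : ZMod l) : psiV l a 1 w • φ (x2 l a 0) = 0 := by
    rw [hw a 1 isUnit_one, zero_smul]
  have hsnd (b : ZMod l) : psiV l 0 (castg l 0 b) w • φ (x2 l 0 b) = 0 := by
    rcases eq_or_ne b 0 with rfl | hb
    · rw [x2_zero, map_zero φ, smul_zero]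
    · rw [hw 0 _ ((IsUnit.mk0 b hb).map (castg l 0)), zero_smul]
  have htwo : (2 : ℂ) • φ ((Rel l).mkQ w) = 0 := by
    simp only [two_smul_map_mk_eq_sum_psiV hφ, hfst, hsnd, sum_const_zero, add_zero]
  exact (smul_eq_zero.1 htwo).resolve_left two_ne_zero

theorem S_eq_span_xy :
    S l = Submodule.span ℂ (Set.range fun p : ZMod l × ZMod l ↦ xy l p.1 p.2) := by
  set P := Submodule.span ℂ (Set.range fun p : ZMod l × ZMod l ↦ xy l p.1 p.2)
  apply le_antisymm
  · have hP (u v : ZMod l) : P.mkQ (xy l u v) = 0 :=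
      (Submodule.Quotient.mk_eq_zero P).2 (Submodule.subset_span ⟨(u, v), rfl⟩)
    simpa only [Submodule.ker_mkQ] using S_le_ker_of_map_xy_eq_zero hP
  · refine Submodule.span_le.2 ?_
    rintro _ ⟨⟨u, v⟩, rfl⟩
    refine ⟨XY l u v, ?_, rfl⟩
    simp only [SetLike.mem_coe, Submodule.mem_iInf, LinearMap.mem_ker, psiV_XY, implies_true]

end Cuspidal

end Symbols

/-! ### The plus part -/

section EvenPart

variable {K E : Type*} [Field K] [AddCommGroup E] [Module K E]

/-- The map `t ↦ (t + σ t) / 2`, which is the projection onto the `+1`-eigenspace when `σ` is an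
involution. -/
def evenPart (σ : E →ₗ[K] E) : E →ₗ[K] E := (2 : K)⁻¹ • (LinearMap.id + σ)

lemma evenPart_apply (σ : E →ₗ[K] E) (t : E) : evenPart σ t = (2 : K)⁻¹ • (t + σ t) := rfl

lemma inf_ker_sub_id_eq_map_evenPart [NeZero (2 : K)] {σ : E →ₗ[K] E}
    (hσ : Function.Involutive σ) {N : Submodule K E} (hN : N ≤ N.comap σ) :
    N ⊓ LinearMap.ker (σ - LinearMap.id) = N.map (evenPart σ) := by
  apply le_antisymm
  · rintro t ⟨ht, hσt⟩
    rw [SetLike.mem_coe, LinearMap.mem_ker, LinearMap.sub_apply, LinearMap.id_apply,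
      sub_eq_zero] at hσt
    exact ⟨t, ht, by rw [evenPart_apply, hσt, ← two_smul K, inv_smul_smul₀ two_ne_zero]⟩
  · rintro _ ⟨t, ht, rfl⟩
    refine ⟨N.smul_mem _ (N.add_mem ht (hN ht)), ?_⟩
    rw [SetLike.mem_coe, LinearMap.mem_ker, LinearMap.sub_apply, LinearMap.id_apply,
      evenPart_apply, map_smul, map_add, hσ, add_comm, sub_self]

end EvenPart

section Plus

variable {l : ℕ}

lemma iV_XY (u v : ZMod l) : iV l (XY l u v) = -XY l (-u) v := by
  simp [iV, XY]

lemma iV_comp_iV : iV l ∘ₗ iV l = LinearMap.id :=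
  symbol_hom_ext (by simp [iV, X2]) (by simp [iV_XY]) (by simp [iV, Y2])

variable (hi : Rel l ≤ (Rel l).comap (iV l))

/-- The involution `i` of the space of modular symbols. -/
noncomputable abbrev involution : M l →ₗ[ℂ] M l := (Rel l).mapQ (Rel l) (iV l) hi

lemma involution_involutive : Function.Involutive (involution hi) := by
  intro m
  obtain ⟨w, rfl⟩ := (Rel l).mkQ_surjective m
  exact congrArg (Rel l).mkQ (LinearMap.congr_fun iV_comp_iV w)

lemma involution_xy (u v : ZMod l) : involution hi (xy l u v) = -xy l (-u) v := by
  rw [xy, Submodule.mapQ_apply, iV_XY]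
  rfl

/-- The class `xy(u,v)₊`. -/
noncomputable def xyPlus (u v : ZMod l) : M l := evenPart (involution hi) (xy l u v)

lemma xyPlus_eq (u v : ZMod l) : xyPlus hi u v = (2 : ℂ)⁻¹ • (xy l u v - xy l (-u) v) := by
  rw [xyPlus, evenPart_apply, involution_xy, sub_eq_add_neg]

variable [Fact l.Prime]

lemma isOddSkew_xyPlus : IsOddSkew (xyPlus hi) where
  neg_left u v := by rw [xyPlus_eq, xyPlus_eq, neg_neg, ← smul_neg, neg_sub]
  swap u v := by
    rw [xyPlus_eq, xyPlus_eq, xy_neg_left, xy_neg_left, ← smul_neg, neg_sub]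

theorem exists_hom_xyPlus_eq {Q : Type*} [AddCommGroup Q] [Module ℂ Q] {β : ZMod l → ZMod l → Q}
    (hβ : IsOddSkew β) : ∃ φ : M l →ₗ[ℂ] Q, ∀ u v, φ (xyPlus hi u v) = β u v := by
  obtain ⟨φ, hφ⟩ := exists_hom_xy_eq hβ
  refine ⟨φ, fun u v ↦ ?_⟩
  rw [xyPlus_eq, map_smul, map_sub, hφ, hφ, hβ.neg_left, sub_neg_eq_add, ← two_smul ℂ,
    inv_smul_smul₀ two_ne_zero]

theorem S_inf_ker_involution_sub_id :
    S l ⊓ LinearMap.ker (involution hi - LinearMap.id) =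
      Submodule.span ℂ (Set.range fun p : ZMod l × ZMod l ↦ xyPlus hi p.1 p.2) := by
  have hS : S l ≤ (S l).comap (involution hi) := by
    rw [S_eq_span_xy, Submodule.span_le]
    rintro _ ⟨⟨u, v⟩, rfl⟩
    rw [SetLike.mem_coe, Submodule.mem_comap, involution_xy]
    exact Submodule.neg_mem _ (Submodule.subset_span ⟨(-u, v), rfl⟩)
  rw [inf_ker_sub_id_eq_map_evenPart (involution_involutive hi) hS, S_eq_span_xy,
    Submodule.map_span, ← Set.range_comp]
  rfl

theorem ker_xyPlus_eq_skewRelations :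
    LinearMap.ker (Finsupp.lift (M l) ℂ {p : ZMod l × ZMod l // p ≠ 0}
      fun p ↦ xyPlus hi p.1.1 p.1.2) = skewRelations (ZMod l) ℂ :=
  have ⟨φ, hφ⟩ := exists_hom_xyPlus_eq hi (isOddSkew_universalSkew ℂ)
  ker_lift_eq_skewRelations (isOddSkew_xyPlus hi) φ hφ

end Plus

end MW

open MW in
theorem stmt3 (l : ℕ) (hp : l.Prime) (hl : 3 ≤ l)
    (hi : Rel l ≤ (Rel l).comap (iV l)) :
    Module.finrank ℂ
        ↥(S l ⊓ LinearMap.ker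
            (Submodule.mapQ (Rel l) (Rel l) (iV l) hi - (LinearMap.id : M l →ₗ[ℂ] M l)))
      = (l - 1) * (l - 3) / 8 ∧
    LinearMap.ker
        ((Finsupp.lift (M l) ℂ {p : ZMod l × ZMod l // p ≠ 0}) fun p =>
          (2 : ℂ)⁻¹ • (xy l p.1.1 p.1.2 +
            Submodule.mapQ (Rel l) (Rel l) (iV l) hi (xy l p.1.1 p.1.2)))
      = Submodule.span ℂ
          {w : {p : ZMod l × ZMod l // p ≠ 0} →₀ ℂ |
            ∃ p q : {p : ZMod l × ZMod l // p ≠ 0},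
              (q.1 = (-p.1.1, p.1.2) ∨ q.1 = (p.1.2, p.1.1)) ∧
              w = Finsupp.single p 1 + Finsupp.single q 1} := by
  have : Fact l.Prime := ⟨hp⟩
  refine ⟨?_, ker_xyPlus_eq_skewRelations hi⟩
  obtain ⟨n, rfl⟩ : Odd l := hp.odd_of_ne_two (by lia)
  have : IsAddTorsionFree (M (2 * n + 1)) := .of_isTorsionFree ℂ _
  have hchoose : (2 * n + 1 - 1) * (2 * n + 1 - 3) / 8 = n.choose 2 := by
    rw [Nat.choose_two_right, show 2 * n + 1 - 3 = 2 * (n - 1) by lia, Nat.add_sub_cancel,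
      show 2 * n * (2 * (n - 1)) = 4 * (n * (n - 1)) by ring]
    lia
  rw [S_inf_ker_involution_sub_id hi, hchoose, finrank_span_range_eq_choose_two
    (isOddSkew_xyPlus hi) (isHalfSystem_zmod n) fun κ hκ ↦ exists_hom_xyPlus_eq hi hκ,
    Fintype.card_fin]
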